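/- arXiv:2402.17654 — 2 statements merged into one kernel-verified Lean document; each statement's English description precedes it below -/
import Mathlib

section
/- For all real numbers x and y with |x| < 1 and |y| < 1, the family (r,s) ∈ ℕ×ℕ ↦ k(r, r+s) · xʳ·yˢ/(r!·s!) is summable. -/
/-!
A permutation `w` avoids both split patterns with respect to `r` exactly when the values at the
first `r` positions (the left) exceeding some value on the right are decreasing, and the values at
the last `s` positions (the right) lying below some value on the left are decreasing.  Let `m` be
the number of values less than every value on the right, and `q` the number of values exceeding
every value on the left.  Then `w` is determined by the positions of the `m` smallest values, the
positions of the `q` largest values, and, for each of the remaining `(r - m) + (s - q)` values,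
the side on which it lies (`card_shape_le`).  Summing over `m` and `q`
(`splitK_subset_shape`) yields
`k(r, r+s) ≤ r! s! (∑ₐ 2ᵃ/a!) (∑_b 2ᵇ/b!) ≤ r! s! exp(2)²` (`splitk_le`),
so that the series is dominated by a constant multiple of a product of two geometric series.
-/

open scoped Classical

/-- `w` contains the split pattern `3|12` with respect to position `r`.
Positions and values are 1-indexed in the paper; here `i : Fin n` represents
position `(i : ℕ) + 1` and the value at position `i` is `(w i : ℕ) + 1`.
The condition `i₁ ≤ r < i₂` (1-indexed) becomes `(i₁ : ℕ) < r ∧ r ≤ (i₂ : ℕ)`. -/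
def Contains312 (n r : ℕ) (w : Equiv.Perm (Fin n)) : Prop :=
  ∃ i₁ i₂ i₃ : Fin n, i₁ < i₂ ∧ i₂ < i₃ ∧ (i₁ : ℕ) < r ∧ r ≤ (i₂ : ℕ) ∧
    w i₂ < w i₃ ∧ w i₃ < w i₁

/-- `w` contains the split pattern `23|1` with respect to position `r`. -/
def Contains231 (n r : ℕ) (w : Equiv.Perm (Fin n)) : Prop :=
  ∃ i₁ i₂ i₃ : Fin n, i₁ < i₂ ∧ i₂ < i₃ ∧ (i₂ : ℕ) < r ∧ r ≤ (i₃ : ℕ) ∧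
    w i₃ < w i₁ ∧ w i₁ < w i₂

/-- `K(r,n)`: the permutations of `{1,…,n}` that avoid both split patterns
`3|12` and `23|1` with respect to position `r`. -/
noncomputable def splitK (r n : ℕ) : Finset (Equiv.Perm (Fin n)) :=
  Finset.univ.filter fun w => ¬ Contains312 n r w ∧ ¬ Contains231 n r w

/-- `k(r,n) = |K(r,n)|`. -/
noncomputable def splitk (r n : ℕ) : ℕ := (splitK r n).card

/-- `K_L(r,n)`: those `w ∈ K(r,n)` for which the value `n` occurs among the
first `r` positions of the one-line notation. -/
noncomputable def splitKL (r n : ℕ) : Finset (Equiv.Perm (Fin n)) :=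
  (splitK r n).filter fun w => ∃ p : Fin n, (p : ℕ) < r ∧ (w p : ℕ) + 1 = n

/-- `K_R(r,n)`: those `w ∈ K(r,n)` for which the value `n` occurs among the
last `n - r` positions of the one-line notation. -/
noncomputable def splitKR (r n : ℕ) : Finset (Equiv.Perm (Fin n)) :=
  (splitK r n).filter fun w => ∃ p : Fin n, r ≤ (p : ℕ) ∧ (w p : ℕ) + 1 = n

/-- `φₙ`: delete the top value `n+1` from the one-line notation of
`w ∈ S_{n+1}`.  If `p = w⁻¹(top)`, then `(phiMap w) k = w k` for `k < p` and
`(phiMap w) k = w (k+1)` for `k ≥ p` (values cast down past the removed top value). -/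
def phiMap {n : ℕ} (w : Equiv.Perm (Fin (n + 1))) : Equiv.Perm (Fin n) :=
  Equiv.removeNone
    ((finSuccEquiv' (w.symm (Fin.last n))).symm.trans (w.trans (finSuccEquiv' (Fin.last n))))

/-- `a(r,s) = k(r, r+s)/(r!·s!) - 1` as a rational number. -/
noncomputable def aRat (r s : ℕ) : ℚ :=
  (splitk r (r + s) : ℚ) / ((Nat.factorial r : ℚ) * (Nat.factorial s : ℚ)) - 1

/-- The permutations of `Fin (r + s)` whose `m` smallest values lie among the first `r` positions,
whose `q` largest values lie among the last `s` positions, and whose other values decrease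
along the first `r` positions and along the last `s` positions. -/
def SplitShape (r s m q : ℕ) (w : Equiv.Perm (Fin (r + s))) : Prop :=
  (∀ i, (w i : ℕ) < m → (i : ℕ) < r) ∧
  (∀ i, r + s - q ≤ (w i : ℕ) → r ≤ (i : ℕ)) ∧
  (∀ i j : Fin (r + s), i < j → (j : ℕ) < r → m ≤ (w i : ℕ) → m ≤ (w j : ℕ) → w j < w i) ∧
  (∀ i j : Fin (r + s), i < j → r ≤ (i : ℕ) → (w i : ℕ) < r + s - q → (w j : ℕ) < r + s - q → w j < w i)

/-- A decreasing bijection between two finite linearly ordered sets is unique. -/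
lemma eq_on_of_decreasing {n : ℕ} (w w' : Equiv.Perm (Fin n)) (P S : Fin n → Prop)
    (h : ∀ i, P i ↔ S (w i)) (h' : ∀ i, P i ↔ S (w' i))
    (hd : ∀ i j, i < j → P i → P j → w j < w i)
    (hd' : ∀ i j, i < j → P i → P j → w' j < w' i) (i : Fin n) (hi : P i) : w i = w' i := by
  have range_eq : ∀ u : Equiv.Perm (Fin n), (∀ i, P i ↔ S (u i)) →
      Set.range (fun i : {i // P i} => OrderDual.toDual (u i)) =
        {v | S (OrderDual.ofDual v)} := by
    intro u hu
    ext v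
    constructor
    · rintro ⟨⟨k, hk⟩, rfl⟩
      exact (hu k).1 hk
    · intro hv
      refine ⟨⟨u.symm (OrderDual.ofDual v), (hu _).2 (by simpa using hv)⟩, by simp⟩
  have mono : ∀ u : Equiv.Perm (Fin n), (∀ i j, i < j → P i → P j → u j < u i) →
      StrictMono (fun i : {i // P i} => OrderDual.toDual (u i)) :=
    fun u hu a b hab => hu a b hab a.2 b.2
  have key := (StrictMono.range_inj (mono w hd) (mono w' hd')).1
    ((range_eq w h).trans (range_eq w' h').symm)
  exact congrFun key ⟨i, hi⟩

/-- A permutation of a given shape is recovered from the positions of its `m` smallest and `q`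
largest values and the set of values occurring on the left. -/
lemma shape_ext {r s m q : ℕ} (w w' : Equiv.Perm (Fin (r + s)))
    (hw : SplitShape r s m q w) (hw' : SplitShape r s m q w')
    (hlow : ∀ v : Fin (r + s), (v : ℕ) < m → w.symm v = w'.symm v)
    (hhigh : ∀ v : Fin (r + s), r + s - q ≤ (v : ℕ) → w.symm v = w'.symm v)
    (hmid : ∀ v : Fin (r + s), m ≤ (v : ℕ) → (v : ℕ) < r + s - q →
      ((w.symm v : ℕ) < r ↔ (w'.symm v : ℕ) < r)) : w = w' := by
  obtain ⟨h1, h2, h3, h4⟩ := hw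
  obtain ⟨h1', h2', h3', h4'⟩ := hw'
  have side : ∀ v : Fin (r + s), ((w.symm v : ℕ) < r ↔ (w'.symm v : ℕ) < r) := by
    intro v
    by_cases a : (v : ℕ) < m
    · rw [hlow v a]
    by_cases b : r + s - q ≤ (v : ℕ)
    · rw [hhigh v b]
    exact hmid v (by omega) (by omega)
  have low : ∀ i, (w i : ℕ) < m ↔ (w' i : ℕ) < m := by
    intro i
    constructor
    · intro h
      have e := hlow _ h
      rw [Equiv.symm_apply_apply] at e
      rw [e, Equiv.apply_symm_apply]; exact h
    · intro h
      have e := hlow _ h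
      rw [Equiv.symm_apply_apply] at e
      rw [← e, Equiv.apply_symm_apply]; exact h
  have high : ∀ i, r + s - q ≤ (w i : ℕ) ↔ r + s - q ≤ (w' i : ℕ) := by
    intro i
    constructor
    · intro h
      have e := hhigh _ h
      rw [Equiv.symm_apply_apply] at e
      rw [e, Equiv.apply_symm_apply]; exact h
    · intro h
      have e := hhigh _ h
      rw [Equiv.symm_apply_apply] at e
      rw [← e, Equiv.apply_symm_apply]; exact h
  ext1 i
  by_cases a : (w i : ℕ) < m
  · have e := hlow _ a
    rw [Equiv.symm_apply_apply] at e
    conv_rhs => rw [e]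
    rw [Equiv.apply_symm_apply]
  by_cases b : r + s - q ≤ (w i : ℕ)
  · have e := hhigh _ b
    rw [Equiv.symm_apply_apply] at e
    conv_rhs => rw [e]
    rw [Equiv.apply_symm_apply]
  by_cases c : (i : ℕ) < r
  · refine eq_on_of_decreasing w w' (fun i => (i : ℕ) < r ∧ m ≤ (w i : ℕ))
      (fun v => (w.symm v : ℕ) < r ∧ m ≤ (v : ℕ)) ?_ ?_ ?_ ?_ i ⟨c, by omega⟩
    · intro i; simp
    · intro i
      have := low i
      simp only [side, Equiv.symm_apply_apply]
      omega
    · intro i j hij hi hj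
      exact h3 i j hij hj.1 hi.2 hj.2
    · intro i j hij hi hj
      have := low i
      have := low j
      exact h3' i j hij hj.1 (by omega) (by omega)
  · refine eq_on_of_decreasing w w' (fun i => r ≤ (i : ℕ) ∧ (w i : ℕ) < r + s - q)
      (fun v => ¬ (w.symm v : ℕ) < r ∧ (v : ℕ) < r + s - q) ?_ ?_ ?_ ?_ i ⟨by omega, by omega⟩
    · intro i; simp
    · intro i
      have := high i
      simp only [side, Equiv.symm_apply_apply]
      omega
    · intro i j hij hi hj
      exact h4 i j hij hi.1 hi.2 hj.2
    · intro i j hij hi hj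
      have := high i
      have := high j
      exact h4' i j hij hi.1 (by omega) (by omega)

/-- The factors count the placements of the `m` smallest values on the left, those of the `q`
largest values on the right, and the choices of side for the remaining values. -/
lemma card_shape_le {r s m q : ℕ} (hm : m ≤ r) (hq : q ≤ s) :
    (Finset.univ.filter (SplitShape r s m q)).card ≤
      r.descFactorial m * s.descFactorial q * 2 ^ ((r - m) + (s - q)) := by
  let F : {w // SplitShape r s m q w} →
      (Fin m ↪ Fin r) × (Fin q ↪ Fin s) × (Fin ((r - m) + (s - q)) → Bool) := fun w =>
    (⟨fun k => ⟨w.1.symm ⟨k, by omega⟩, w.2.1 _ (by simp)⟩, by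
        intro a b hab
        simpa [Fin.ext_iff] using w.1.symm.injective (Fin.ext (by simpa using hab))⟩,
     ⟨fun k => ⟨w.1.symm ⟨r + s - q + k, by omega⟩ - r, by
          have := w.2.2.1 (w.1.symm ⟨r + s - q + k, by omega⟩) (by simp)
          omega⟩, by
        intro a b hab
        have ha := w.2.2.1 (w.1.symm ⟨r + s - q + a, by omega⟩) (by simp)
        have hb := w.2.2.1 (w.1.symm ⟨r + s - q + b, by omega⟩) (by simp)
        simp only [Fin.mk.injEq] at hab
        have := w.1.symm.injective (Fin.ext (a := w.1.symm ⟨r + s - q + a, by omega⟩)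
          (b := w.1.symm ⟨r + s - q + b, by omega⟩) (by omega))
        simpa [Fin.ext_iff] using this⟩,
     fun k => decide ((w.1.symm ⟨m + k, by omega⟩ : ℕ) < r))
  have hF : Function.Injective F := by
    rintro ⟨w, hw⟩ ⟨w', hw'⟩ h
    obtain ⟨e1, e2, e3⟩ : _ ∧ _ ∧ _ := by simpa only [F, Prod.mk.injEq] using h
    apply Subtype.ext
    refine shape_ext w w' hw hw' ?_ ?_ ?_
    · intro v hv
      have e : (w.symm v : ℕ) = (w'.symm v : ℕ) :=
        congrArg (fun z : Fin r => (z : ℕ)) (DFunLike.congr_fun e1 ⟨v, hv⟩)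
      exact Fin.ext e
    · intro v hv
      have e : (w.symm ⟨r + s - q + (v - (r + s - q)), by omega⟩ : ℕ) - r =
          (w'.symm ⟨r + s - q + (v - (r + s - q)), by omega⟩ : ℕ) - r :=
        congrArg Fin.val (DFunLike.congr_fun e2 ⟨v - (r + s - q), by omega⟩)
      have hv' : (⟨r + s - q + (v - (r + s - q)), by omega⟩ : Fin (r + s)) = v :=
        Fin.ext (by simp; omega)
      rw [hv'] at e
      have ha := hw.2.1 (w.symm v) (by simpa using hv)
      have hb := hw'.2.1 (w'.symm v) (by simpa using hv)
      exact Fin.ext (by omega)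
    · intro v hv hv2
      have e := congrFun e3 ⟨v - m, by omega⟩
      have hv' : (⟨m + (v - m), by omega⟩ : Fin (r + s)) = v := Fin.ext (by simp; omega)
      simpa only [hv', decide_eq_decide] using e
  have := Fintype.card_le_of_injective F hF
  rw [Fintype.card_subtype] at this
  simpa [Fintype.card_embedding_eq, mul_assoc] using this

/-- For `m` take the least value on the right, and for `q` the number of values exceeding the
largest value on the left. -/
lemma splitK_subset_shape (r s : ℕ) :
    splitK r (r + s) ⊆ (Finset.range (r + 1) ×ˢ Finset.range (s + 1)).biUnion
      fun p => Finset.univ.filter (SplitShape r s p.1 p.2) := by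
  intro w hw
  obtain ⟨hA, hB⟩ : ¬ Contains312 (r + s) r w ∧ ¬ Contains231 (r + s) r w := by
    simpa [splitK] using hw
  -- The disjunct `r + s ≤ m` covers the case in which the right side is empty.
  have exm : ∃ m, r + s ≤ m ∨ ∃ j : Fin (r + s), r ≤ (j : ℕ) ∧ (w j : ℕ) = m := ⟨_, Or.inl le_rfl⟩
  have exq : ∃ q, r + s ≤ q ∨ ∃ i : Fin (r + s), (i : ℕ) < r ∧ (w i : ℕ) + q + 1 = r + s :=
    ⟨_, Or.inl le_rfl⟩
  obtain ⟨m, hm, hm'⟩ : ∃ m, (r + s ≤ m ∨ ∃ j : Fin (r + s), r ≤ (j : ℕ) ∧ (w j : ℕ) = m) ∧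
      ∀ k < m, ¬ (r + s ≤ k ∨ ∃ j : Fin (r + s), r ≤ (j : ℕ) ∧ (w j : ℕ) = k) :=
    ⟨Nat.find exm, Nat.find_spec exm, fun k hk => Nat.find_min exm hk⟩
  obtain ⟨q, hq, hq'⟩ : ∃ q, (r + s ≤ q ∨
        ∃ i : Fin (r + s), (i : ℕ) < r ∧ (w i : ℕ) + q + 1 = r + s) ∧
      ∀ k < q, ¬ (r + s ≤ k ∨
        ∃ i : Fin (r + s), (i : ℕ) < r ∧ (w i : ℕ) + k + 1 = r + s) :=
    ⟨Nat.find exq, Nat.find_spec exq, fun k hk => Nat.find_min exq hk⟩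
  have hlow : ∀ i, (w i : ℕ) < m → (i : ℕ) < r := by
    intro i hi
    by_contra hc
    exact hm' _ hi (Or.inr ⟨i, by omega, rfl⟩)
  have hmn : m ≤ r + s := by
    by_contra hc
    exact hm' (r + s) (by omega) (Or.inl le_rfl)
  have hqn : q ≤ r + s := by
    by_contra hc
    exact hq' (r + s) (by omega) (Or.inl le_rfl)
  have hhigh : ∀ i, r + s - q ≤ (w i : ℕ) → r ≤ (i : ℕ) := by
    intro i hi
    by_contra hc
    exact hq' (r + s - 1 - w i) (by omega) (Or.inr ⟨i, by omega, by omega⟩)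
  have hmr : m ≤ r := by
    have := Fintype.card_le_of_injective
      (fun k : Fin m => (⟨w.symm ⟨k, by omega⟩, hlow _ (by simp)⟩ : Fin r)) (by
        intro a b hab
        simpa [Fin.ext_iff] using w.symm.injective (Fin.ext (by simpa using hab)))
    simpa using this
  have hqs : q ≤ s := by
    have := Fintype.card_le_of_injective
      (fun k : Fin q => (⟨w.symm ⟨r + s - q + k, by omega⟩ - r, by
          have := hhigh (w.symm ⟨r + s - q + k, by omega⟩) (by simp)
          omega⟩ : Fin s)) (by
        intro a b hab
        have ha := hhigh (w.symm ⟨r + s - q + a, by omega⟩) (by simp)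
        have hb := hhigh (w.symm ⟨r + s - q + b, by omega⟩) (by simp)
        simp only [Fin.mk.injEq] at hab
        have := w.symm.injective (Fin.ext (a := w.symm ⟨r + s - q + a, by omega⟩)
          (b := w.symm ⟨r + s - q + b, by omega⟩) (by omega))
        simpa [Fin.ext_iff] using this)
    simpa using this
  simp only [Finset.mem_biUnion, Finset.mem_product, Finset.mem_range, Finset.mem_filter,
    Finset.mem_univ, true_and]
  refine ⟨(m, q), ⟨by simp; omega, by simp; omega⟩, hlow, hhigh, ?_, ?_⟩
  · intro i j hij hj hi1 hj1
    by_contra hc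
    have hne : w i ≠ w j := fun e => hij.ne (w.injective e)
    rcases hm with hm | ⟨k, hk, hkm⟩
    · have := (w i).2
      simp only at hi1
      omega
    · have : w k ≠ w i := fun e => by
        have := w.injective e
        subst this
        omega
      exact hB ⟨i, j, k, hij, by omega, hj, hk, by simp only at hi1; omega, by omega⟩
  · intro i j hij hi hi1 hj1
    by_contra hc
    have hne : w i ≠ w j := fun e => hij.ne (w.injective e)
    simp only at hi1 hj1
    rcases hq with hq | ⟨k, hk, hkm⟩
    · omega
    · have : w k ≠ w j := fun e => by
        have := w.injective e
        subst this
        omega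
      exact hA ⟨k, i, j, by omega, hij, hk, hi, by omega, by omega⟩

lemma sum_descFactorial_le (r : ℕ) :
    ∑ m ∈ Finset.range (r + 1), (r.descFactorial m : ℝ) * 2 ^ (r - m) ≤
      (r.factorial : ℝ) * Real.exp 2 := by
  calc ∑ m ∈ Finset.range (r + 1), (r.descFactorial m : ℝ) * 2 ^ (r - m)
      = ∑ m ∈ Finset.range (r + 1),
          (r.factorial : ℝ) * (2 ^ (r - m) / ((r - m).factorial : ℝ)) := by
        refine Finset.sum_congr rfl fun m hm => ?_
        have hm : m ≤ r := by simpa [Nat.lt_succ_iff] using hm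
        rw [← Nat.factorial_mul_descFactorial hm]
        have := Nat.factorial_ne_zero (r - m)
        push_cast
        field_simp
    _ = (r.factorial : ℝ) * ∑ a ∈ Finset.range (r + 1), (2 : ℝ) ^ a / (a.factorial : ℝ) := by
        rw [← Finset.mul_sum,
          Finset.sum_flip (fun a => (2 : ℝ) ^ a / (a.factorial : ℝ))]
    _ ≤ _ := by
        gcongr
        exact Real.sum_le_exp_of_nonneg (by norm_num) _

lemma splitk_le (r s : ℕ) : (splitk r (r + s) : ℝ) ≤
    ((r.factorial : ℝ) * (s.factorial : ℝ)) * (Real.exp 2 * Real.exp 2) := by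
  have h1 : splitk r (r + s) ≤ ∑ p ∈ Finset.range (r + 1) ×ˢ Finset.range (s + 1),
      r.descFactorial p.1 * s.descFactorial p.2 * 2 ^ ((r - p.1) + (s - p.2)) := by
    refine (Finset.card_le_card (splitK_subset_shape r s)).trans
      (Finset.card_biUnion_le.trans (Finset.sum_le_sum fun p hp => ?_))
    simp only [Finset.mem_product, Finset.mem_range] at hp
    exact card_shape_le (by omega) (by omega)
  calc (splitk r (r + s) : ℝ)
      ≤ ∑ p ∈ Finset.range (r + 1) ×ˢ Finset.range (s + 1),
          ((r.descFactorial p.1 : ℝ) * 2 ^ (r - p.1)) *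
            ((s.descFactorial p.2 : ℝ) * 2 ^ (s - p.2)) := by
        refine (Nat.cast_le.2 h1).trans (le_of_eq ?_)
        push_cast
        exact Finset.sum_congr rfl fun p _ => by rw [pow_add]; ring
    _ = (∑ m ∈ Finset.range (r + 1), (r.descFactorial m : ℝ) * 2 ^ (r - m)) *
          ∑ q ∈ Finset.range (s + 1), (s.descFactorial q : ℝ) * 2 ^ (s - q) := by
        rw [Finset.sum_mul_sum, Finset.sum_product]
    _ ≤ ((r.factorial : ℝ) * Real.exp 2) * ((s.factorial : ℝ) * Real.exp 2) := by
        gcongr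
        · exact sum_descFactorial_le r
        · exact sum_descFactorial_le s
    _ = _ := by ring

/-- For `|x| < 1`, `|y| < 1`, the family `(r,s) ↦ k(r, r+s)·xʳyˢ/(r!·s!)` is summable. -/
theorem stmt17 (x y : ℝ) (hx : |x| < 1) (hy : |y| < 1) :
    Summable (fun p : ℕ × ℕ => (splitk p.1 (p.1 + p.2) : ℝ) * x ^ p.1 * y ^ p.2 /
      ((Nat.factorial p.1 : ℝ) * (Nat.factorial p.2 : ℝ))) := by
  have geom : Summable fun p : ℕ × ℕ => |x| ^ p.1 * |y| ^ p.2 :=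
    (summable_geometric_of_lt_one (abs_nonneg x) hx).mul_of_nonneg
      (summable_geometric_of_lt_one (abs_nonneg y) hy)
      (fun _ => by positivity) (fun _ => by positivity)
  refine Summable.of_norm_bounded (geom.mul_left (Real.exp 2 * Real.exp 2)) fun p => ?_
  have hpos : (0 : ℝ) < (p.1.factorial : ℝ) * (p.2.factorial : ℝ) := by positivity
  rw [Real.norm_eq_abs, abs_div, abs_of_pos hpos, abs_mul, abs_mul, abs_pow, abs_pow,
    Nat.abs_cast, div_le_iff₀ hpos]
  calc (splitk p.1 (p.1 + p.2) : ℝ) * |x| ^ p.1 * |y| ^ p.2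
      ≤ ((p.1.factorial : ℝ) * (p.2.factorial : ℝ)) * (Real.exp 2 * Real.exp 2)
          * |x| ^ p.1 * |y| ^ p.2 := by
        gcongr
        exact splitk_le p.1 p.2
    _ = _ := by ring
end

section
/- For all real numbers x and y with |x| < 1 and |y| < 1, (1 − x − y + x·y) · ∑_{(r,s) ∈ ℕ×ℕ} a(r,s) · xʳ·yˢ = ∑_{(r,s) ∈ ℕ×ℕ} C(r+s, r) · x^{r+1}·y^{s+1}/((r+1)!·(s+1)!), where a(r,s) := k(r, r+s)/(r!·s!) − 1, the sums are tsums over ℕ×ℕ (with a(r,s) coerced to ℝ), and C(a,b) denotes the binomial coefficient. -/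
/-!
The coefficients satisfy the recurrence
`a(r+1,s+1) = a(r,s+1) + a(r+1,s) - a(r,s) + C(r+s,r) / ((r+1)! (s+1)!)` and vanish on the
boundary, so the claim follows by comparing coefficients; the bound `0 ≤ a(r,s) ≤ r s`, also a
consequence of the recurrence, makes the series converge absolutely.

In terms of `k` the recurrence comes from the positions of the smallest and of the largest value
of `w ∈ K(r+1, r+s+2)` (`splitk_rec`). A split pattern requires a value below each left entry
and a value above each right entry it uses. Hence, if the largest value is on the right, deleting
it gives an arbitrary element of `K(r+1, r+s+1)`, and it may stand at any of the `s+1` right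
positions; symmetrically for the smallest value on the left; and if both happen, both can be
deleted. In the remaining case the smallest value is on the right and the largest on the left:
then `w` has to decrease on both sides, and so is given by its set of left values, which leaves
`C(r+s,r)` choices.

To delete positions without reindexing, patterns are considered for bijections `π ≃ γ` between
arbitrary finite linear orders with a set `L` of left positions (`SplitGood`); the number of
pattern-avoiding ones depends only on the numbers of left and right positions
(`card_splitGood`).
-/

open scoped Classical

/-! ### Split pattern avoidance for general linear orders -/

/-- A bijection `w` from a set `π` of positions, split into left positions `L` and right positions
`Lᶜ`, to a set `γ` of values is good if it avoids both split patterns.  Only the order inside `L` and the order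
inside `Lᶜ` matter, so `L` need not be an initial segment. -/
def SplitGood {π γ : Type} [LT π] [LT γ] (L : Finset π) (w : π ≃ γ) : Prop :=
  (∀ i ∈ L, ∀ j ∉ L, ∀ k ∉ L, j < k → w j < w k → ¬ w k < w i) ∧
  (∀ i ∈ L, ∀ j ∈ L, ∀ k ∉ L, i < j → w k < w i → ¬ w i < w j)

lemma splitGood_card_congr {π γ π' γ' : Type} [LT π] [LT γ] [LT π'] [LT γ']
    (L : Finset π) (L' : Finset π') (e : π ≃ π') (f : γ ≃ γ')
    (hf : ∀ x y, f x < f y ↔ x < y) (he : ∀ x, e x ∈ L' ↔ x ∈ L)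
    (hlt : ∀ x y, (x ∈ L ↔ y ∈ L) → (e x < e y ↔ x < y)) :
    Nat.card {w : π ≃ γ // SplitGood L w} = Nat.card {w : π' ≃ γ' // SplitGood L' w} := by
  refine Nat.card_congr (Equiv.subtypeEquiv (Equiv.equivCongr e f) fun w => ?_)
  unfold SplitGood
  simp only [← e.forall_congr_right (q := fun i => i ∈ L' → _),
    ← e.forall_congr_right (q := fun i => i ∉ L' → _), he, Equiv.equivCongr_apply_apply,
    Equiv.symm_apply_apply, hf]
  constructor
  · rintro ⟨h1, h2⟩
    exact ⟨fun i hi j hj k hk hjk => h1 i hi j hj k hk ((hlt _ _ (by simp [hj, hk])).1 hjk),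
      fun i hi j hj k hk hij => h2 i hi j hj k hk ((hlt _ _ (by simp [hi, hj])).1 hij)⟩
  · rintro ⟨h1, h2⟩
    exact ⟨fun i hi j hj k hk hjk => h1 i hi j hj k hk ((hlt _ _ (by simp [hj, hk])).2 hjk),
      fun i hi j hj k hk hij => h2 i hi j hj k hk ((hlt _ _ (by simp [hi, hj])).2 hij)⟩

lemma splitk_eq (r s : ℕ) : splitk r (r + s) =
    Nat.card {w : Fin (r + s) ≃ Fin (r + s) //
      SplitGood (Finset.univ.filter fun i : Fin (r + s) => (i : ℕ) < r) w} := by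
  rw [splitk, splitK, ← Fintype.card_subtype, ← Nat.card_eq_fintype_card]
  refine Nat.card_congr (Equiv.subtypeEquivRight fun w => ?_)
  simp only [Contains312, Contains231, SplitGood, Finset.mem_filter, Finset.mem_univ, true_and,
    not_lt, not_exists, not_and]
  constructor
  · rintro ⟨h1, h2⟩
    exact ⟨fun i hi j hj k hk hjk h => h1 i j k (Fin.lt_def.2 (by omega)) hjk hi hj h,
      fun i hi j hj k hk hij h => h2 i j k hij (Fin.lt_def.2 (by omega)) hj hk h⟩
  · rintro ⟨h1, h2⟩
    refine ⟨fun i j k hij hjk hi hj h => h1 i hi j hj k ?_ hjk h,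
      fun i j k hij hjk hj hk h => h2 i ?_ j hj k hk hij h⟩
    · rw [Fin.lt_def] at hjk; omega
    · rw [Fin.lt_def] at hij; omega

/-- The number of good bijections depends only on the numbers of left and right positions. -/
lemma card_splitGood {π γ : Type} [LinearOrder π] [LinearOrder γ] [Finite π] [Finite γ]
    (L : Finset π) (r s : ℕ) (hL : L.card = r) (hπ : Nat.card π = r + s)
    (hγ : Nat.card γ = r + s) :
    Nat.card {w : π ≃ γ // SplitGood L w} = splitk r (r + s) := by
  have := Fintype.ofFinite π
  have := Fintype.ofFinite γ
  rw [Nat.card_eq_fintype_card] at hπ hγ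
  rw [splitk_eq]
  set L0 : Finset (Fin (r + s)) := Finset.univ.filter fun i : Fin (r + s) => (i : ℕ) < r with hL0
  have h0 : L0.card = r := by
    rw [hL0, Fin.card_filter_val_lt]; omega
  have h0c : L0ᶜ.card = s := by rw [Finset.card_compl, h0, Fintype.card_fin]; omega
  have hLc : Lᶜ.card = s := by rw [Finset.card_compl, hL, hπ]; omega
  let a := finSumEquivOfFinset hL hLc
  let b := finSumEquivOfFinset h0 h0c
  have ha1 : ∀ i, a (Sum.inl i) ∈ L := fun i => by simp [a]
  have ha2 : ∀ i, a (Sum.inr i) ∉ L := fun i => by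
    rw [finSumEquivOfFinset_inr, ← Finset.mem_compl]; exact Finset.orderEmbOfFin_mem Lᶜ hLc i
  have hb1 : ∀ i, b (Sum.inl i) ∈ L0 := fun i => by
    rw [finSumEquivOfFinset_inl]; exact Finset.orderEmbOfFin_mem L0 h0 i
  have hb2 : ∀ i, b (Sum.inr i) ∉ L0 := fun i => by
    rw [finSumEquivOfFinset_inr, ← Finset.mem_compl]; exact Finset.orderEmbOfFin_mem L0ᶜ h0c i
  let f := (Fintype.orderIsoFinOfCardEq γ hγ).symm
  refine splitGood_card_congr L L0 (a.symm.trans b) f.toEquiv (fun x y => f.lt_iff_lt) ?_ ?_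
  · rw [← a.forall_congr_right]
    rintro (i | i)
    · simp [ha1, hb1]
    · simp [ha2, hb2]
  · rw [← a.forall_congr_right]
    intro x
    rw [← a.forall_congr_right]
    revert x
    rintro (i | i) (j | j)
    · simp only [Equiv.trans_apply, Equiv.symm_apply_apply]
      simp [a, b]
    · simp [ha1, ha2]
    · simp [ha1, ha2]
    · simp only [Equiv.trans_apply, Equiv.symm_apply_apply]
      simp [a, b]

/-! ### Deletion of an extreme value -/

/-- Deleting the position `p` together with its value `c`: bijections sending `p` to `c`
correspond to bijections of the complements. -/
lemma card_delete {π γ : Type} (p : π) (c : γ) (Q : (π ≃ γ) → Prop)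
    (Q' : ({x // x ≠ p} ≃ {y // y ≠ c}) → Prop)
    (h : ∀ (w : π ≃ γ) (w' : {x // x ≠ p} ≃ {y // y ≠ c}), w p = c →
      (∀ x, (w' x : γ) = w x) → (Q w ↔ Q' w')) :
    Nat.card {w : π ≃ γ // w p = c ∧ Q w} = Nat.card {w' // Q' w'} := by
  have key : ∀ w : π ≃ γ, w p = c → ∀ x, x ≠ p ↔ w x ≠ c := by
    rintro w rfl x; simp
  refine Nat.card_congr (Equiv.ofBijective
    (fun w => ⟨w.1.subtypeEquiv (key w.1 w.2.1), (h _ _ w.2.1 fun x => rfl).1 w.2.2⟩) ⟨?_, ?_⟩)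
  · rintro ⟨w, hw, _⟩ ⟨v, hv, _⟩ hwv
    simp only [Subtype.mk.injEq] at hwv ⊢
    ext x
    by_cases hx : x = p
    · rw [hx, hw, hv]
    · exact congrArg Subtype.val (DFunLike.congr_fun hwv ⟨x, hx⟩)
  · rintro ⟨w', hw'⟩
    let w : π ≃ γ := ((Equiv.optionSubtypeNe p).symm.trans (Equiv.optionCongr w')).trans
      (Equiv.optionSubtypeNe c)
    have h1 : w p = c := by simp [w]
    have h2 : ∀ x : {x // x ≠ p}, (w' x : γ) = w x := fun x => by
      simp [w, Equiv.optionSubtypeNe_symm_of_ne x.2]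
    refine ⟨⟨w, h1, (h w w' h1 h2).2 hw'⟩, ?_⟩
    apply Subtype.ext
    ext x
    exact (h2 x).symm

/-- Summing over the position in `S` that carries the value `c`. -/
lemma card_symm_mem {π γ : Type} [Finite π] [Finite γ] (c : γ) (Q : (π ≃ γ) → Prop)
    (S : Finset π) (m : ℕ) (h : ∀ p ∈ S, Nat.card {w : π ≃ γ // w p = c ∧ Q w} = m) :
    Nat.card {w : π ≃ γ // w.symm c ∈ S ∧ Q w} = S.card * m := by
  have e : {w : π ≃ γ // w.symm c ∈ S ∧ Q w} ≃ Σ p : S, {w : π ≃ γ // w p = c ∧ Q w} :=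
    { toFun := fun w => ⟨⟨w.1.symm c, w.2.1⟩, w.1, by simp, w.2.2⟩
      invFun := fun x => ⟨x.2.1, by
        rw [(Equiv.symm_apply_eq x.2.1).2 x.2.2.1.symm]; exact x.1.2, x.2.2.2⟩
      left_inv := fun w => rfl
      right_inv := by
        rintro ⟨⟨p, hp⟩, w, rfl, hw⟩
        exact Sigma.ext (by simp) ((Subtype.heq_iff_coe_eq (by simp)).2 rfl) }
  rw [Nat.card_congr e, Nat.card_sigma, Finset.sum_congr rfl (fun p _ => h p.1 p.2)]
  simp

lemma card_split {α : Type} [Finite α] (P Q : α → Prop) :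
    Nat.card {w // Q w} = Nat.card {w // P w ∧ Q w} + Nat.card {w // ¬ P w ∧ Q w} := by
  have := Fintype.ofFinite α
  simp only [Nat.card_eq_fintype_card, Fintype.card_subtype]
  rw [← Finset.card_filter_add_card_filter_not (s := Finset.univ.filter Q) P,
    Finset.filter_filter, Finset.filter_filter]
  simp only [and_comm]

/-- Deleting the smallest value from a left position, or the largest value from a right position,
neither creates nor destroys split patterns. -/
lemma splitGood_delete {π γ : Type} [LinearOrder π] [LinearOrder γ] (L : Finset π) (p : π) (c : γ)
    (hpc : p ∈ L ∧ IsBot c ∨ p ∉ L ∧ IsTop c)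
    (w : π ≃ γ) (w' : {x // x ≠ p} ≃ {y // y ≠ c}) (hw : w p = c)
    (hw' : ∀ x, (w' x : γ) = w x) :
    SplitGood L w ↔ SplitGood (L.subtype (· ≠ p)) w' := by
  simp only [SplitGood, Finset.mem_subtype, ← Subtype.coe_lt_coe, hw', Subtype.forall]
  constructor
  · rintro ⟨h1, h2⟩
    exact ⟨fun i _ hi j _ hj k _ hk => h1 i hi j hj k hk,
      fun i _ hi j _ hj k _ hk => h2 i hi j hj k hk⟩
  · rintro ⟨h1, h2⟩
    -- In a split pattern every left position has some value below its own, and every right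
    -- position some value above its own, so `p` takes no part in one.
    have hl : ∀ i ∈ L, ∀ k, w k < w i → i ≠ p := by
      rintro i hi k hk rfl
      rcases hpc with h | h
      · rw [hw] at hk; exact (h.2 _).not_gt hk
      · exact h.1 hi
    have hr : ∀ i ∉ L, ∀ k, w i < w k → i ≠ p := by
      rintro i hi k hk rfl
      rcases hpc with h | h
      · exact hi h.1
      · rw [hw] at hk; exact (h.2 _).not_gt hk
    refine ⟨fun i hi j hj k hk hjk h h' => ?_, fun i hi j hj k hk hij h h' => ?_⟩
    · exact h1 i (hl i hi _ h') hi j (hr j hj _ h) hj k (hr k hk _ h') hk hjk h h'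
    · exact h2 i (hl i hi _ h) hi j (hl j hj _ h') hj k (hr k hk _ h) hk hij h h'

lemma card_ne {π : Type} [Finite π] (p : π) (n : ℕ) (h : Nat.card π = n + 1) :
    Nat.card {x // x ≠ p} = n := by
  have := Fintype.ofFinite π
  rw [Nat.card_eq_fintype_card] at *
  have := Fintype.card_subtype_compl (· = p)
  simp only [Fintype.card_subtype_eq] at this
  simp only [ne_eq]
  omega

/-! ### The recurrence for `k` -/

/-- Bijections whose largest value sits on the right. -/
lemma card_top_right {π γ : Type} [LinearOrder π] [LinearOrder γ] [Finite π] [Finite γ]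
    (L : Finset π) (r s : ℕ) (hL : L.card = r) (hπ : Nat.card π = r + (s + 1))
    (hγ : Nat.card γ = r + (s + 1)) (t : γ) (ht : IsTop t) :
    Nat.card {w : π ≃ γ // ¬ w.symm t ∈ L ∧ SplitGood L w} = (s + 1) * splitk r (r + s) := by
  have := Fintype.ofFinite π
  have hLc : Lᶜ.card = s + 1 := by
    rw [Nat.card_eq_fintype_card] at hπ
    rw [Finset.card_compl, hL, hπ]; omega
  rw [← hLc, ← card_symm_mem t (SplitGood L) Lᶜ]
  · simp only [Finset.mem_compl]
  · intro p hp
    rw [Finset.mem_compl] at hp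
    rw [card_delete p t (SplitGood L) (SplitGood (L.subtype (· ≠ p)))
      (splitGood_delete L p t (Or.inr ⟨hp, ht⟩))]
    apply card_splitGood
    · rw [Finset.card_subtype, Finset.filter_true_of_mem, hL]
      rintro x hx rfl; exact hp hx
    · exact card_ne p _ hπ
    · exact card_ne t _ hγ

lemma card_top_left {π γ : Type} [LinearOrder π] [LinearOrder γ] [Finite π] [Finite γ]
    (L : Finset π) (r s : ℕ) (hL : L.card = r) (hπ : Nat.card π = r + (s + 1))
    (hγ : Nat.card γ = r + (s + 1)) (t : γ) (ht : IsTop t) :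
    Nat.card {w : π ≃ γ // w.symm t ∈ L ∧ SplitGood L w} + (s + 1) * splitk r (r + s) =
      splitk r (r + (s + 1)) := by
  rw [← card_splitGood L r (s + 1) hL hπ hγ, ← card_top_right L r s hL hπ hγ t ht]
  exact (card_split (fun w : π ≃ γ => w.symm t ∈ L) (SplitGood L)).symm

/-- Bijections with the smallest value on the left and the largest one on the left. -/
lemma card_bot_left_top_left {π γ : Type} [LinearOrder π] [LinearOrder γ] [Finite π] [Finite γ]
    (L : Finset π) (r s : ℕ) (hL : L.card = r + 1) (hπ : Nat.card π = r + 1 + (s + 1))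
    (hγ : Nat.card γ = r + 1 + (s + 1)) (b t : γ) (hb : IsBot b) (ht : IsTop t) (hbt : t ≠ b) :
    Nat.card {w : π ≃ γ // w.symm b ∈ L ∧ w.symm t ∈ L ∧ SplitGood L w} +
      (r + 1) * ((s + 1) * splitk r (r + s)) = (r + 1) * splitk r (r + (s + 1)) := by
  have hπ' : Nat.card π = r + (s + 1) + 1 := by omega
  have hγ' : Nat.card γ = r + (s + 1) + 1 := by omega
  have hm : ∀ p ∈ L, Nat.card {w : π ≃ γ // w p = b ∧ w.symm t ∈ L ∧ SplitGood L w} =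
      splitk r (r + (s + 1)) - (s + 1) * splitk r (r + s) := by
    intro p hp
    have hL' : (L.subtype (· ≠ p)).card = r := by
      rw [Finset.card_subtype, Finset.filter_ne', Finset.card_erase_of_mem hp, hL]; rfl
    rw [card_delete p b _ (fun w' => w'.symm ⟨t, hbt⟩ ∈ L.subtype (· ≠ p) ∧
      SplitGood (L.subtype (· ≠ p)) w')]
    · rw [← card_top_left (L.subtype (· ≠ p)) r s hL' (card_ne p _ hπ') (card_ne b _ hγ')
        ⟨t, hbt⟩ fun y => ht y.1]
      omega
    · intro w w' hw hw'
      rw [← splitGood_delete L p b (Or.inl ⟨hp, hb⟩) w w' hw hw', Finset.mem_subtype]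
      have : w.symm t = (w'.symm ⟨t, hbt⟩ : π) := by
        rw [Equiv.symm_apply_eq, ← hw']; simp
      rw [this]
  rw [card_symm_mem b _ L _ hm, hL, ← mul_add, Nat.sub_add_cancel]
  obtain ⟨p, hp⟩ : L.Nonempty := by rw [← Finset.card_pos, hL]; omega
  have hL' : (L.subtype (· ≠ p)).card = r := by
    rw [Finset.card_subtype, Finset.filter_ne', Finset.card_erase_of_mem hp, hL]; rfl
  rw [← card_top_left (L.subtype (· ≠ p)) r s hL' (card_ne p _ hπ') (card_ne b _ hγ')
        ⟨t, hbt⟩ fun y => ht y.1]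
  omega

/-- If the smallest value is on the right and the largest one on the left, then `w` is decreasing
on both sides, hence determined by its set of left values. -/
lemma card_bot_right_top_left {π γ : Type} [LinearOrder π] [LinearOrder γ] [Finite π] [Finite γ]
    (L : Finset π) (r s : ℕ) (hL : L.card = r + 1) (hπ : Nat.card π = r + 1 + (s + 1))
    (hγ : Nat.card γ = r + 1 + (s + 1)) (b t : γ) (hb : IsBot b) (ht : IsTop t) (hbt : t ≠ b) :
    Nat.card {w : π ≃ γ // ¬ w.symm b ∈ L ∧ w.symm t ∈ L ∧ SplitGood L w} =
      (r + s).choose r := by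
  have := Fintype.ofFinite π
  have := Fintype.ofFinite γ
  rw [Nat.card_eq_fintype_card] at hπ hγ
  have hLc : Lᶜ.card = s + 1 := by rw [Finset.card_compl, hL, hπ]; omega
  let a := finSumEquivOfFinset hL hLc
  have ha1 : ∀ i, a (Sum.inl i) ∈ L := fun i => by simp [a]
  have ha2 : ∀ i, a (Sum.inr i) ∉ L := fun i => by
    rw [finSumEquivOfFinset_inr, ← Finset.mem_compl]; exact Finset.orderEmbOfFin_mem Lᶜ hLc i
  set U : Finset γ := (Finset.univ.erase b).erase t with hU
  have hUcard : U.card = r + s := by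
    rw [hU, Finset.card_erase_of_mem (by simp [hbt]), Finset.card_erase_of_mem (by simp),
      Finset.card_univ, hγ]; omega
  have hTc : ∀ T ∈ U.powersetCard r, (insert t T).card = r + 1 := by
    intro T hT
    rw [Finset.mem_powersetCard] at hT
    rw [Finset.card_insert_of_notMem, hT.2]
    intro h; simpa [hU] using hT.1 h
  have hTcc : ∀ T ∈ U.powersetCard r, (insert t T)ᶜ.card = s + 1 := by
    intro T hT
    rw [Finset.card_compl, hTc T hT, hγ]; omega
  -- the bijection, decreasing on both sides, with set of left values `insert t T`
  let F : U.powersetCard r → (π ≃ γ) := fun T =>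
    a.symm.trans ((Equiv.sumCongr Fin.revPerm Fin.revPerm).trans
      (finSumEquivOfFinset (hTc T.1 T.2) (hTcc T.1 T.2)))
  have hF1 : ∀ T i, F T (a (Sum.inl i)) = (insert t T.1).orderEmbOfFin (hTc T.1 T.2) i.rev :=
    fun T i => by simp [F]
  have hF2 : ∀ T i, F T (a (Sum.inr i)) = (insert t T.1)ᶜ.orderEmbOfFin (hTcc T.1 T.2) i.rev :=
    fun T i => by simp [F]
  have hFL : ∀ T x, F T x ∈ insert t T.1 ↔ x ∈ L := by
    intro T
    rw [← a.forall_congr_right]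
    rintro (i | i)
    · simp only [hF1, ha1, iff_true]; exact Finset.orderEmbOfFin_mem _ _ _
    · simp only [hF2, ha2, iff_false, ← Finset.mem_compl (s := insert t T.1)]
      exact Finset.orderEmbOfFin_mem _ _ _
  have hanti1 : ∀ T x y, x ∈ L → y ∈ L → x < y → F T y < F T x := by
    intro T
    rw [← a.forall_congr_right]
    intro x
    rw [← a.forall_congr_right]
    revert x
    rintro (i | i) (j | j)
    · intro _ _ h
      rw [hF1, hF1]
      simpa [a] using h
    all_goals simp [ha1, ha2]
  have hanti2 : ∀ T x y, x ∉ L → y ∉ L → x < y → F T y < F T x := by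
    intro T
    rw [← a.forall_congr_right]
    intro x
    rw [← a.forall_congr_right]
    revert x
    rintro (i | i) (j | j)
    rotate_left 3
    · intro _ _ h
      rw [hF2, hF2]
      simpa [a] using h
    all_goals simp [ha1, ha2]
  have hmem : ∀ T, ¬ (F T).symm b ∈ L ∧ (F T).symm t ∈ L ∧ SplitGood L (F T) := by
    intro T
    refine ⟨?_, ?_, ?_, ?_⟩
    · rw [← hFL T, Equiv.apply_symm_apply, Finset.mem_insert, not_or]
      refine ⟨hbt.symm, fun h => ?_⟩
      have := (Finset.mem_powersetCard.1 T.2).1 h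
      simp [hU] at this
    · rw [← hFL T, Equiv.apply_symm_apply]; simp
    · exact fun i _ j hj k hk hjk h => absurd h (hanti2 T j k hj hk hjk).not_gt
    · exact fun i hi j hj k _ hij _ => (hanti1 T i j hi hj hij).not_gt
  have hbij : Function.Bijective (fun T => (⟨F T, hmem T⟩ :
      {w : π ≃ γ // ¬ w.symm b ∈ L ∧ w.symm t ∈ L ∧ SplitGood L w})) := by
    constructor
    · intro T T' h
      have h : F T = F T' := congrArg Subtype.val h
      have hins : insert t T.1 = insert t T'.1 := by
        ext v
        have h1 := hFL T ((F T).symm v)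
        have h2 := hFL T' ((F T).symm v)
        rw [← h] at h2
        rw [Equiv.apply_symm_apply] at h1 h2
        rw [h1, h2]
      have hnot : ∀ T : U.powersetCard r, t ∉ T.1 := fun T hT => by
        have := (Finset.mem_powersetCard.1 T.2).1 hT
        simp [hU] at this
      apply Subtype.ext
      rw [← Finset.erase_insert (hnot T), hins, Finset.erase_insert (hnot T')]
    · rintro ⟨w, hwb, hwt, h1, h2⟩
      have hd1 : ∀ i ∈ L, ∀ j ∈ L, i < j → w j < w i := by
        intro i hi j hj hij
        refine lt_of_le_of_ne (not_lt.1 (h2 i hi j hj _ hwb hij ?_)) (by simpa using hij.ne')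
        rw [Equiv.apply_symm_apply]
        refine lt_of_le_of_ne (hb _) ?_
        rintro rfl; simp [hi] at hwb
      have hd2 : ∀ i ∉ L, ∀ j ∉ L, i < j → w j < w i := by
        intro i hi j hj hij
        by_contra hcon
        have hlt : w i < w j := lt_of_le_of_ne (not_lt.1 hcon) (by simpa using hij.ne)
        refine h1 _ hwt i hi j hj hij hlt ?_
        rw [Equiv.apply_symm_apply]
        refine lt_of_le_of_ne (ht _) ?_
        rintro rfl; simp [hj] at hwt
      set S : Finset γ := L.map w.toEmbedding with hS
      have hwS : ∀ x, w x ∈ S ↔ x ∈ L := by simp [hS]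
      have htS : t ∈ S := by rw [← w.apply_symm_apply t, hwS]; exact hwt
      have hbS : b ∉ S := by rw [← w.apply_symm_apply b, hwS]; exact hwb
      have hT : S.erase t ∈ U.powersetCard r := by
        rw [Finset.mem_powersetCard, Finset.card_erase_of_mem htS, hS, Finset.card_map, hL]
        refine ⟨?_, rfl⟩
        intro x hx
        rw [Finset.mem_erase] at hx
        have : x ≠ b := by rintro rfl; exact hbS hx.2
        simp [hU, this, hx.1]
      have hins : insert t (S.erase t) = S := Finset.insert_erase htS
      refine ⟨⟨S.erase t, hT⟩, Subtype.ext (Equiv.ext ?_)⟩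
      change ∀ x, F ⟨S.erase t, hT⟩ x = w x
      rw [← a.forall_congr_right]
      rintro (i | i)
      · have := Finset.orderEmbOfFin_unique (hTc _ hT) (f := fun i => w (a (Sum.inl i.rev)))
          (fun i => by rw [hins, hwS]; exact ha1 _) (fun i j hij =>
            hd1 _ (ha1 _) _ (ha1 _) (by simpa [a] using hij))
        rw [hF1, ← this]; simp
      · have := Finset.orderEmbOfFin_unique (hTcc _ hT) (f := fun i => w (a (Sum.inr i.rev)))
          (fun i => by rw [Finset.mem_compl, hins, hwS]; exact ha2 _) (fun i j hij =>
            hd2 _ (ha2 _) _ (ha2 _) (by simpa [a] using hij))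
        rw [hF2, ← this]; simp
  rw [← Nat.card_congr (Equiv.ofBijective _ hbij), Nat.card_eq_fintype_card, Fintype.card_coe,
    Finset.card_powersetCard, hUcard]

/-- The recurrence for `k`, with the subtracted term moved to the left to stay in `ℕ`. -/
lemma splitk_rec (r s : ℕ) :
    splitk (r + 1) (r + 1 + (s + 1)) + (r + 1) * ((s + 1) * splitk r (r + s)) =
      (s + 1) * splitk (r + 1) (r + 1 + s) + (r + 1) * splitk r (r + (s + 1)) +
        (r + s).choose r := by
  set L : Finset (Fin (r + 1 + (s + 1))) := Finset.univ.filter fun i => (i : ℕ) < r + 1 with hL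
  have hLc : L.card = r + 1 := by rw [hL, Fin.card_filter_val_lt]; omega
  have hn : Nat.card (Fin (r + 1 + (s + 1))) = r + 1 + (s + 1) := Nat.card_fin _
  have ht : IsTop (⟨r + 1 + s, by omega⟩ : Fin (r + 1 + (s + 1))) := fun i => by
    rw [Fin.le_def]; simp only; omega
  have hb : IsBot (⟨0, by omega⟩ : Fin (r + 1 + (s + 1))) := fun i => by
    rw [Fin.le_def]; simp
  have hbt : (⟨r + 1 + s, by omega⟩ : Fin (r + 1 + (s + 1))) ≠ ⟨0, by omega⟩ := by
    simp [Fin.ext_iff]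
  have e1 := card_top_left L (r + 1) s hLc hn hn _ ht
  have e2 := card_bot_left_top_left L r s hLc hn hn _ _ hb ht hbt
  have e3 := card_bot_right_top_left L r s hLc hn hn _ _ hb ht hbt
  rw [card_split (fun w : Fin (r + 1 + (s + 1)) ≃ Fin (r + 1 + (s + 1)) =>
    w.symm ⟨0, by omega⟩ ∈ L)] at e1
  omega

lemma splitk_zero_left (s : ℕ) : splitk 0 (0 + s) = s.factorial := by
  simp [splitk, splitK, Contains312, Contains231, Fintype.card_perm]

lemma splitk_zero_right (r : ℕ) : splitk r (r + 0) = r.factorial := by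
  have h1 : ∀ w, ¬ Contains312 r r w := by
    rintro w ⟨i, j, k, _, _, _, h, _⟩; omega
  have h2 : ∀ w, ¬ Contains231 r r w := by
    rintro w ⟨i, j, k, _, _, _, h, _⟩; omega
  simp [splitk, splitK, h1, h2, Fintype.card_perm]

/-! ### The coefficients `a(r,s)` and their generating function -/

lemma aRat_zero_left (s : ℕ) : aRat 0 s = 0 := by
  rw [aRat, splitk_zero_left]
  have : (s.factorial : ℚ) ≠ 0 := by positivity
  simp [this]

lemma aRat_zero_right (r : ℕ) : aRat r 0 = 0 := by
  rw [aRat, splitk_zero_right]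
  have : (r.factorial : ℚ) ≠ 0 := by positivity
  simp [this]

/-- The coefficient `C(r+s, r) / ((r+1)! (s+1)!)` of the right-hand side. -/
noncomputable def ellRat (r s : ℕ) : ℚ :=
  ((r + s).choose r : ℚ) / (((r + 1).factorial : ℚ) * ((s + 1).factorial : ℚ))

lemma aRat_rec (r s : ℕ) :
    aRat (r + 1) (s + 1) = aRat r (s + 1) + aRat (r + 1) s - aRat r s + ellRat r s := by
  have h : (splitk (r + 1) (r + 1 + (s + 1)) : ℚ) + (r + 1) * ((s + 1) * splitk r (r + s)) =
      (s + 1) * splitk (r + 1) (r + 1 + s) + (r + 1) * splitk r (r + (s + 1)) +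
        (r + s).choose r := by exact_mod_cast splitk_rec r s
  have hr : (r.factorial : ℚ) ≠ 0 := by positivity
  have hs : (s.factorial : ℚ) ≠ 0 := by positivity
  have hr' : (r + 1 : ℚ) ≠ 0 := by positivity
  have hs' : (s + 1 : ℚ) ≠ 0 := by positivity
  simp only [aRat, ellRat, Nat.factorial_succ, Nat.cast_mul, Nat.cast_add, Nat.cast_one]
  field_simp
  linear_combination h

lemma ellRat_nonneg (r s : ℕ) : 0 ≤ ellRat r s := by unfold ellRat; positivity

lemma ellRat_le_one (r s : ℕ) : ellRat r s ≤ 1 := by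
  have h2 : ∀ n : ℕ, 2 ^ n ≤ (n + 1).factorial := by
    intro n
    induction n with
    | zero => simp
    | succ n ih =>
      rw [pow_succ, Nat.factorial_succ (n + 1), mul_comm]
      exact Nat.mul_le_mul (by omega) ih
  have h : (r + s).choose r ≤ (r + 1).factorial * (s + 1).factorial :=
    calc (r + s).choose r ≤ 2 ^ (r + s) := Nat.choose_le_two_pow _ _
      _ = 2 ^ r * 2 ^ s := pow_add _ _ _
      _ ≤ _ := Nat.mul_le_mul (h2 r) (h2 s)
  unfold ellRat
  rw [div_le_one (by positivity)]
  exact_mod_cast h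

lemma aRat_diff_bounds (r s : ℕ) :
    0 ≤ aRat (r + 1) s - aRat r s ∧ aRat (r + 1) s - aRat r s ≤ s := by
  induction s with
  | zero => simp [aRat_zero_right]
  | succ s ih =>
    have := aRat_rec r s
    have := ellRat_nonneg r s
    have := ellRat_le_one r s
    push_cast
    constructor <;> linarith [ih.1, ih.2]

lemma aRat_bounds (r s : ℕ) : 0 ≤ aRat r s ∧ aRat r s ≤ r * s := by
  induction r with
  | zero => simp [aRat_zero_left]
  | succ r ih =>
    have := aRat_diff_bounds r s
    push_cast
    constructor <;> linarith [ih.1, ih.2]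

lemma summable_aRat (x y : ℝ) (hx : |x| < 1) (hy : |y| < 1) :
    Summable fun p : ℕ × ℕ => ((aRat p.1 p.2 : ℚ) : ℝ) * x ^ p.1 * y ^ p.2 := by
  have h : ∀ z : ℝ, |z| < 1 → Summable fun n : ℕ => (n : ℝ) * |z| ^ n := fun z hz => by
    simpa using summable_pow_mul_geometric_of_norm_lt_one 1 (r := |z|) (by simpa using hz)
  refine Summable.of_norm_bounded
    ((h x hx).mul_of_nonneg (h y hy) (fun n => by positivity) (fun n => by positivity))
    fun p => ?_
  have h0 : (0 : ℝ) ≤ (aRat p.1 p.2 : ℚ) := by exact_mod_cast (aRat_bounds p.1 p.2).1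
  have h1 : ((aRat p.1 p.2 : ℚ) : ℝ) ≤ p.1 * p.2 := by exact_mod_cast (aRat_bounds p.1 p.2).2
  rw [norm_mul, norm_mul, norm_pow, norm_pow, Real.norm_eq_abs, Real.norm_eq_abs,
    Real.norm_eq_abs, abs_of_nonneg h0]
  calc _ ≤ (p.1 * p.2 : ℝ) * |x| ^ p.1 * |y| ^ p.2 := by gcongr
    _ = _ := by ring

/-- Equation (3.3): for `|x| < 1`, `|y| < 1`,
`(1-x-y+xy)·𝒜(x,y) = ℒ(x,y)`, where `𝒜(x,y) = ∑ a(r,s) xʳyˢ` and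
`ℒ(x,y) = ∑ C(r+s, r) x^{r+1}y^{s+1}/((r+1)!·(s+1)!)`. -/
theorem stmt18 (x y : ℝ) (hx : |x| < 1) (hy : |y| < 1) :
    (1 - x - y + x * y) * ∑' p : ℕ × ℕ, ((aRat p.1 p.2 : ℚ) : ℝ) * x ^ p.1 * y ^ p.2 =
      ∑' p : ℕ × ℕ, (Nat.choose (p.1 + p.2) p.1 : ℝ) * x ^ (p.1 + 1) * y ^ (p.2 + 1) /
        ((Nat.factorial (p.1 + 1) : ℝ) * (Nat.factorial (p.2 + 1) : ℝ)) := by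
  have hS := summable_aRat x y hx hy
  set f : ℕ × ℕ → ℝ := fun p => ((aRat p.1 p.2 : ℚ) : ℝ) * x ^ p.1 * y ^ p.2 with hf
  have hinj : ∀ i j : ℕ, Function.Injective fun p : ℕ × ℕ => (p.1 + i, p.2 + j) := by
    rintro i j ⟨a, b⟩ ⟨c, d⟩ h
    simpa using h
  -- As `a` vanishes on the boundary, the series is unchanged when the boundary terms are dropped.
  have hsh : ∀ i j : ℕ, i ≤ 1 → j ≤ 1 → ∑' p : ℕ × ℕ, f (p.1 + i, p.2 + j) = ∑' p, f p := by
    intro i j hi hj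
    refine (hinj i j).tsum_eq (f := f) ?_
    rintro ⟨r, s⟩ h
    rw [Function.mem_support] at h
    have hr : r ≠ 0 := by rintro rfl; simp [hf, aRat_zero_left] at h
    have hs : s ≠ 0 := by rintro rfl; simp [hf, aRat_zero_right] at h
    exact ⟨(r - i, s - j), by ext <;> simp only <;> omega⟩
  have hsum : ∀ i j : ℕ, Summable fun p : ℕ × ℕ => f (p.1 + i, p.2 + j) := fun i j =>
    hS.comp_injective (hinj i j)
  have key : ∀ p : ℕ × ℕ, (Nat.choose (p.1 + p.2) p.1 : ℝ) * x ^ (p.1 + 1) * y ^ (p.2 + 1) /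
        ((Nat.factorial (p.1 + 1) : ℝ) * (Nat.factorial (p.2 + 1) : ℝ)) =
      f (p.1 + 1, p.2 + 1) - x * f (p.1 + 0, p.2 + 1) - y * f (p.1 + 1, p.2 + 0) + x * y * f p := by
    rintro ⟨r, s⟩
    have h : ((aRat (r + 1) (s + 1) : ℚ) : ℝ) = aRat r (s + 1) + aRat (r + 1) s - aRat r s +
        ((r + s).choose r : ℝ) / (((r + 1).factorial : ℝ) * ((s + 1).factorial : ℝ)) := by
      rw [aRat_rec, ellRat]; push_cast; ring
    simp only [hf, h, add_zero]
    ring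
  rw [tsum_congr key, Summable.tsum_add
      (((hsum 1 1).sub ((hsum 0 1).mul_left x)).sub ((hsum 1 0).mul_left y)) (hS.mul_left (x * y)),
    Summable.tsum_sub ((hsum 1 1).sub ((hsum 0 1).mul_left x)) ((hsum 1 0).mul_left y),
    Summable.tsum_sub (hsum 1 1) ((hsum 0 1).mul_left x), tsum_mul_left, tsum_mul_left,
    tsum_mul_left, hsh 1 1 le_rfl le_rfl,
    hsh 0 1 zero_le_one le_rfl, hsh 1 0 le_rfl zero_le_one]
  ring
end
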